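/- For complex numbers α, β with 0 < Re(α) < Re(β) and a real number b > 0, the integral ∫₀^∞ z^(α−1) (z + b + √(z² + 2bz))^(−β) dz converges and equals 2β · b^(−β) · (b/2)^α · Γ(2α)Γ(β − α) / Γ(1 + α + β). -/

import Mathlib

open MeasureTheory

/-!
The substitution `z = b (1 - t)² / (2 t)` maps `(0, 1)` bijectively onto `(0, ∞)` and rationalises
the square root: `z + b + √(z² + 2bz) = b / t` (`sqrt_expr_substMap`). It turns the integrand into
`b^(-β) (b/2)^α (t^(β-α-1) (1-t)^(2α-1) + t^(β-α) (1-t)^(2α-1))` (`jacobian_smul_integrand`), so the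
integral is a multiple of `B(β-α, 2α) + B(β-α+1, 2α)`. Expressing the Beta function through Gamma
functions and applying `Γ(s + 1) = s Γ(s)` collapses this sum to the stated closed form
(`betaIntegral_add_betaIntegral`).
-/

namespace Oberhettinger

/-- The rationalising substitution `t ↦ z`, used for `0 < t < 1`. -/
noncomputable def substMap (b t : ℝ) : ℝ := b * (1 - t) ^ 2 / (2 * t)

/-- Thus `z ↦ b / (z + b + √(z² + 2bz))` is a left inverse of the substitution. -/
lemma sqrt_expr_substMap {b t : ℝ} (hb : 0 < b) (ht0 : 0 < t) (ht1 : t < 1) :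
    substMap b t + b + Real.sqrt (substMap b t ^ 2 + 2 * b * substMap b t) = b / t := by
  have h : substMap b t ^ 2 + 2 * b * substMap b t = (b * (1 - t ^ 2) / (2 * t)) ^ 2 := by
    unfold substMap
    field_simp
    ring
  have hnn : 0 ≤ b * (1 - t ^ 2) / (2 * t) := by
    have : 0 ≤ 1 - t ^ 2 := by nlinarith
    positivity
  rw [h, Real.sqrt_sq hnn]
  unfold substMap
  field_simp
  ring

lemma injOn_substMap {b : ℝ} (hb : 0 < b) : Set.InjOn (substMap b) (Set.Ioo 0 1) := by
  intro x hx y hy h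
  have hx' := sqrt_expr_substMap hb hx.1 hx.2
  have hy' := sqrt_expr_substMap hb hy.1 hy.2
  rw [h, hy'] at hx'
  have hx0 := hx.1
  have hy0 := hy.1
  field_simp at hx'
  exact hx'

lemma image_substMap {b : ℝ} (hb : 0 < b) :
    substMap b '' Set.Ioo 0 1 = Set.Ioi 0 := by
  ext z
  constructor
  · rintro ⟨t, ⟨ht0, ht1⟩, rfl⟩
    have : 0 < 1 - t := by linarith
    simp only [Set.mem_Ioi, substMap]
    positivity
  · intro hz
    have hz : 0 < z := hz
    have hs := Real.sq_sqrt (show 0 ≤ z ^ 2 + 2 * b * z by positivity)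
    set s := Real.sqrt (z ^ 2 + 2 * b * z) with hsdef
    have hs0 : 0 ≤ s := Real.sqrt_nonneg _
    have hw : 0 < z + b + s := by positivity
    refine ⟨b / (z + b + s), ⟨by positivity, ?_⟩, ?_⟩
    · rw [div_lt_one hw]
      linarith
    · unfold substMap
      field_simp
      linear_combination hs

lemma hasDerivAt_substMap (b : ℝ) {t : ℝ} (ht : 0 < t) :
    HasDerivAt (substMap b) (-(b / 2 * (1 - t) * (1 + t) / t ^ 2)) t := by
  have h1 : HasDerivAt (fun t : ℝ => b * (1 - t) ^ 2) (b * (2 * (1 - t) * (-1))) t := by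
    simpa using (((hasDerivAt_id t).const_sub 1).pow 2).const_mul b
  have h2 : HasDerivAt (fun t : ℝ => 2 * t) 2 t := by
    simpa using (hasDerivAt_id t).const_mul 2
  refine (h1.div h2 (by positivity)).congr_deriv ?_
  field_simp
  ring

/-- The integrand transforms into a combination of two Beta integrands. -/
lemma jacobian_smul_integrand (α β : ℂ) {b t : ℝ} (hb : 0 < b) (ht0 : 0 < t) (ht1 : t < 1) :
    |-(b / 2 * (1 - t) * (1 + t) / t ^ 2)| •
      ((substMap b t : ℂ) ^ (α - 1) * ((substMap b t + b +
        Real.sqrt (substMap b t ^ 2 + 2 * b * substMap b t) : ℝ) : ℂ) ^ (-β)) =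
    (b : ℂ) ^ (-β) * ((b : ℂ) / 2) ^ α *
      ((t : ℂ) ^ (β - α - 1) * (1 - (t : ℂ)) ^ (2 * α - 1) +
        (t : ℂ) ^ (β - α + 1 - 1) * (1 - (t : ℂ)) ^ (2 * α - 1)) := by
  have h1 : 0 < 1 - t := by linarith
  have hz : 0 < substMap b t := by
    unfold substMap
    positivity
  have key : ∀ {x : ℝ}, 0 < x → ∀ s : ℂ, (x : ℂ) ^ s = Complex.exp (Real.log x * s) := by
    intro x hx s
    rw [Complex.cpow_def_of_ne_zero (by exact_mod_cast hx.ne'), Complex.ofReal_log hx.le]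
  have hlogz : Real.log (substMap b t) = Real.log (b / 2) + 2 * Real.log (1 - t) - Real.log t := by
    rw [show substMap b t = b / 2 * (1 - t) ^ 2 / t by unfold substMap; field_simp,
      Real.log_div (by positivity) ht0.ne', Real.log_mul (by positivity) (by positivity),
      Real.log_pow]
    norm_num
  have hlogw : Real.log (b / t) = Real.log b - Real.log t := Real.log_div hb.ne' ht0.ne'
  have hzα : (substMap b t : ℂ) ^ α =
      ((b / 2 : ℝ) : ℂ) ^ α * ((1 - t : ℝ) : ℂ) ^ (2 * α) * (t : ℂ) ^ (-α) := by
    rw [key hz, key (by positivity : 0 < b / 2), key h1, key ht0, hlogz, ← Complex.exp_add,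
      ← Complex.exp_add]
    congr 1
    push_cast
    ring
  have hwβ : ((b / t : ℝ) : ℂ) ^ (-β) = (b : ℂ) ^ (-β) * (t : ℂ) ^ β := by
    rw [key (by positivity : 0 < b / t), key hb, key ht0, hlogw, ← Complex.exp_add]
    congr 1
    push_cast
    ring
  have hb' : (b : ℂ) ≠ 0 := by exact_mod_cast hb.ne'
  have ht' : (t : ℂ) ≠ 0 := by exact_mod_cast ht0.ne'
  have h1' : (1 : ℂ) - t ≠ 0 := by exact_mod_cast h1.ne'
  have hz' : (substMap b t : ℂ) ≠ 0 := by exact_mod_cast hz.ne'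
  rw [sqrt_expr_substMap hb ht0 ht1, hwβ, Complex.cpow_sub _ _ hz', hzα, abs_neg,
    abs_of_pos (by positivity), Complex.real_smul, Complex.cpow_one,
    show β - α + 1 - 1 = β + -α by ring, show β - α - 1 = β + -α - 1 by ring,
    Complex.cpow_sub _ _ ht', Complex.cpow_sub _ _ h1', Complex.cpow_add _ _ ht',
    Complex.cpow_one, Complex.cpow_one]
  unfold substMap
  push_cast
  field_simp

lemma betaIntegral_add_betaIntegral {α β : ℂ} (hα : 0 < α.re) (hαβ : α.re < β.re) :
    Complex.betaIntegral (β - α) (2 * α) + Complex.betaIntegral (β - α + 1) (2 * α) =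
      2 * β * Complex.Gamma (2 * α) * Complex.Gamma (β - α) / Complex.Gamma (1 + α + β) := by
  have h2 : 0 < (2 * α).re := by simpa using hα
  have hd : 0 < (β - α).re := by simpa using hαβ
  have hd1 : 0 < (β - α + 1).re := by
    rw [Complex.add_re, Complex.one_re]
    linarith
  have hs : 0 < (α + β).re := by
    rw [Complex.add_re]
    linarith
  have hs0 : α + β ≠ 0 := by
    intro h
    simp [h] at hs
  have hd0 : β - α ≠ 0 := by
    intro h
    simp [h] at hd
  have hG : Complex.Gamma (α + β) ≠ 0 := Complex.Gamma_ne_zero_of_re_pos hs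
  rw [Complex.betaIntegral_eq_Gamma_mul_div _ _ hd h2,
    Complex.betaIntegral_eq_Gamma_mul_div _ _ hd1 h2,
    show β - α + 2 * α = α + β by ring, show β - α + 1 + 2 * α = α + β + 1 by ring,
    show 1 + α + β = α + β + 1 by ring, Complex.Gamma_add_one _ hs0, Complex.Gamma_add_one _ hd0]
  field_simp
  ring

end Oberhettinger

open Oberhettinger in
/-- **Oberhettinger's integral formula.**
For complex `α, β` with `0 < Re α < Re β` and real `b > 0`, the integral
`∫₀^∞ z^(α−1) (z + b + √(z² + 2bz))^(−β) dz` converges and equals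
`2β b^(−β) (b/2)^α Γ(2α) Γ(β−α) / Γ(1+α+β)`. -/
theorem oberhettinger_integral (α β : ℂ) (b : ℝ) (hb : 0 < b)
    (hα : 0 < α.re) (hαβ : α.re < β.re) :
    IntegrableOn
      (fun z : ℝ => (z : ℂ) ^ (α - 1) *
        ((z + b + Real.sqrt (z ^ 2 + 2 * b * z) : ℝ) : ℂ) ^ (-β))
      (Set.Ioi 0) volume ∧
    ∫ z in Set.Ioi (0 : ℝ),
        (z : ℂ) ^ (α - 1) *
          ((z + b + Real.sqrt (z ^ 2 + 2 * b * z) : ℝ) : ℂ) ^ (-β)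
      = 2 * β * (b : ℂ) ^ (-β) * ((b : ℂ) / 2) ^ α *
          Complex.Gamma (2 * α) * Complex.Gamma (β - α) /
          Complex.Gamma (1 + α + β) := by
  have h2 : 0 < (2 * α).re := by simpa using hα
  have hd : 0 < (β - α).re := by simpa using hαβ
  have hd1 : 0 < (β - α + 1).re := by
    rw [Complex.add_re, Complex.one_re]
    linarith
  have hI1 := Complex.betaIntegral_convergent hd h2
  have hI2 := Complex.betaIntegral_convergent hd1 h2
  have hderiv : ∀ t ∈ Set.Ioo (0 : ℝ) 1, HasDerivWithinAt (substMap b)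
      (-(b / 2 * (1 - t) * (1 + t) / t ^ 2)) (Set.Ioo 0 1) t :=
    fun t ht => (hasDerivAt_substMap b ht.1).hasDerivWithinAt
  have hEq : Set.EqOn _ _ (Set.Ioo (0 : ℝ) 1) :=
    fun t ht => jacobian_smul_integrand α β hb ht.1 ht.2
  rw [← image_substMap hb]
  constructor
  · rw [integrableOn_image_iff_integrableOn_abs_deriv_smul measurableSet_Ioo hderiv
      (injOn_substMap hb), integrableOn_congr_fun hEq measurableSet_Ioo]
    have h := ((hI1.add hI2).const_mul ((b : ℂ) ^ (-β) * ((b : ℂ) / 2) ^ α)).1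
    exact h.mono_set Set.Ioo_subset_Ioc_self
  · rw [integral_image_eq_integral_abs_deriv_smul measurableSet_Ioo hderiv (injOn_substMap hb),
      setIntegral_congr_fun measurableSet_Ioo hEq, ← integral_Ioc_eq_integral_Ioo,
      ← intervalIntegral.integral_of_le zero_le_one, intervalIntegral.integral_const_mul,
      intervalIntegral.integral_add hI1 hI2]
    have h := betaIntegral_add_betaIntegral hα hαβ
    unfold Complex.betaIntegral at h
    rw [h]
    ring
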